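/- Let d ≥ 2, α ∈ (1,2), β ∈ (0,1), T > 0, and for 0 < t ≤ T let (P_t φ)(x) = ∫_{ℝ^d} φ(x + y) p_t(y) dy, where p_t(x) = (2π)^{−d} ∫_{ℝ^d} cos(⟨x,u⟩) e^{−tΨ(u)} du and Ψ(u) = ∫_{|y|≤1} (1 − cos(⟨u,y⟩)) |y|^{−(d+α)} dy. Then there exists a constant C < ∞ (depending only on d, α, β, T) such that for every φ ∈ C_b^β(ℝ^d) and every 0 < t ≤ T, P_t φ is twice continuously differentiable and ‖D²(P_t φ)‖_∞ ≤ C t^{−(2−β)/α} ‖φ‖_{C_b^β(ℝ^d)}. -/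

import Mathlib

open MeasureTheory Metric
open scoped RealInnerProductSpace

/-- Characteristic exponent of the truncated `α`-stable process. -/
noncomputable def Psi (d : ℕ) (α : ℝ) (u : EuclideanSpace ℝ (Fin d)) : ℝ :=
  ∫ y in Metric.closedBall (0 : EuclideanSpace ℝ (Fin d)) 1,
    (1 - Real.cos ⟪u, y⟫) / ‖y‖ ^ ((d : ℝ) + α)

/-- Transition density of the truncated `α`-stable process, via Fourier inversion. -/
noncomputable def pdens (d : ℕ) (α : ℝ) (t : ℝ) (x : EuclideanSpace ℝ (Fin d)) : ℝ :=
  ((2 * Real.pi) ^ d)⁻¹ *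
    ∫ u : EuclideanSpace ℝ (Fin d), Real.cos ⟪x, u⟫ * Real.exp (-t * Psi d α u)

/-- The semigroup `(P_t φ)(x) = ∫ φ(x+y) p_t(y) dy`. -/
noncomputable def Pt (d : ℕ) (α : ℝ) (φ : EuclideanSpace ℝ (Fin d) → ℝ) (t : ℝ)
    (x : EuclideanSpace ℝ (Fin d)) : ℝ :=
  ∫ y : EuclideanSpace ℝ (Fin d), φ (x + y) * pdens d α t y

/-- The `C_b^β` norm: supremum norm plus `β`-Hölder seminorm. -/
noncomputable def holderNorm {E : Type*} [NormedAddCommGroup E] (β : ℝ) (f : E → ℝ) : ℝ :=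
  (⨆ x : E, |f x|) +
    ⨆ p : {q : E × E // q.1 ≠ q.2}, |f p.val.1 - f p.val.2| / ‖p.val.1 - p.val.2‖ ^ β

/-!
Write `p_t` for the density and choose `ρ ≤ 1` with `t * ρ ^ (-α) = T`. Split the jumps at length
`ρ`: by scaling, those shorter than `ρ` contribute the factor `exp (-T Ψ (ρ u))` to `exp (-t Ψ u)`,
while the longer ones form a compound Poisson process, with law `π` at time `t`. Hence `P_t φ` is
the convolution of the `π`-average of `φ`, which has the same bound and the same Hölder constant as
`φ`, with `p_T` dilated to the length scale `ρ`. As `Ψ` is smooth of moderate growth and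
`Ψ u ≥ c (|u| ^ α - 1)`, the function `p_T` is Schwartz, so all derivatives fall on it. Its `n`-th
derivative has mean zero, so against a `β`-Hölder function it integrates to at most the Hölder
constant times `∫ |y| ^ β |Dⁿ p_T| dy`, which the dilation multiplies by
`ρ ^ (β - n) = (t / T) ^ (-(n - β) / α)`.
-/

open scoped ContDiff SchwartzMap

section ParametricIntegral

variable {X E V : Type*} [MeasurableSpace X] {μ : Measure X}
  [NormedAddCommGroup E] [NormedSpace ℝ E] [NormedAddCommGroup V] [NormedSpace ℝ V]
  {F : E → X → V}

theorem hasFTaylorSeriesUpTo_integral_of_dominated (hF : ∀ a, ContDiff ℝ ∞ (F · a))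
    (hmeas : ∀ n x, AEStronglyMeasurable (fun a => iteratedFDeriv ℝ n (F · a) x) μ)
    (hdom : ∀ n x₀, ∃ b : X → ℝ, Integrable b μ ∧
      ∀ᵐ a ∂μ, ∀ x ∈ ball x₀ 1, ‖iteratedFDeriv ℝ n (F · a) x‖ ≤ b a) :
    HasFTaylorSeriesUpTo ∞ (fun x => ∫ a, F x a ∂μ)
      (fun x n => ∫ a, iteratedFDeriv ℝ n (F · a) x ∂μ) := by
  refine (hasFTaylorSeriesUpTo_top_iff' le_rfl).2 ⟨fun x => ?_, fun n x₀ => ?_⟩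
  · let eval₀ := (continuousMultilinearCurryFin0 ℝ E V).toContinuousLinearEquiv
    change eval₀ (∫ a, _ ∂μ) = _
    rw [← ContinuousLinearEquiv.integral_comp_comm]
    simp [eval₀]
  · obtain ⟨b₀, hb₀, hle₀⟩ := hdom n x₀
    obtain ⟨b, hb, hle⟩ := hdom (n + 1) x₀
    let curry := continuousMultilinearCurryLeftEquiv ℝ (fun _ : Fin (n + 1) => E) V
    have hcurry : curry (∫ a, iteratedFDeriv ℝ (n + 1) (F · a) x₀ ∂μ) =
        ∫ a, curry (iteratedFDeriv ℝ (n + 1) (F · a) x₀) ∂μ :=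
      (ContinuousLinearEquiv.integral_comp_comm (𝕜 := ℝ) (E := E [×n + 1]→L[ℝ] V)
        (F := E →L[ℝ] (E [×n]→L[ℝ] V)) curry.toContinuousLinearEquiv _).symm
    change HasFDerivAt _ (curry (∫ a, iteratedFDeriv ℝ (n + 1) (F · a) x₀ ∂μ)) x₀
    rw [hcurry]
    refine hasFDerivAt_integral_of_dominated_of_fderiv_le
      (F' := fun x a => curry (iteratedFDeriv ℝ (n + 1) (F · a) x))
      (ball_mem_nhds x₀ one_pos) (.of_forall (hmeas n))
      (hb₀.mono' (hmeas n x₀) (hle₀.mono fun a ha => ha x₀ (mem_ball_self one_pos)))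
      (curry.continuous.comp_aestronglyMeasurable (hmeas (n + 1) x₀))
      (hle.mono fun a ha x hx => (LinearIsometryEquiv.norm_map _ _).trans_le (ha x hx)) hb
      (.of_forall fun a x _ => ?_)
    exact (hasFTaylorSeriesUpTo_top_iff' le_rfl).1 (hF a).ftaylorSeries |>.2 n x

end ParametricIntegral

section SchwartzKernel

variable {E V : Type*} [NormedAddCommGroup E] [NormedSpace ℝ E]
  [NormedAddCommGroup V] [NormedSpace ℝ V] (f : 𝓢(E, V))

theorem exists_norm_iteratedFDeriv_sub_le_on_ball (n k : ℕ) :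
    ∃ M : ℝ, ∀ x₀ w : E, ∀ x ∈ ball x₀ 1,
      ‖iteratedFDeriv ℝ n f (x - w)‖ ≤ M * (1 + ‖x₀ - w‖) ^ (-(k : ℝ)) := by
  let M := 2 ^ k * (Finset.Iic (k, n)).sup (fun m => SchwartzMap.seminorm ℝ m.1 m.2) f
  have hM (z : E) : (1 + ‖z‖) ^ k * ‖iteratedFDeriv ℝ n f z‖ ≤ M :=
    SchwartzMap.one_add_le_sup_seminorm_apply (m := (k, n)) le_rfl le_rfl f z
  refine ⟨2 ^ k * M, fun x₀ w x hx => ?_⟩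
  have hshift : 1 + ‖x₀ - w‖ ≤ 2 * (1 + ‖x - w‖) := by
    have := norm_sub_le_norm_sub_add_norm_sub x₀ x w
    have := mem_ball_iff_norm'.1 hx
    linarith [norm_nonneg (x - w)]
  rw [Real.rpow_neg (by positivity), Real.rpow_natCast, ← div_eq_mul_inv,
    le_div_iff₀ (by positivity)]
  calc ‖iteratedFDeriv ℝ n f (x - w)‖ * (1 + ‖x₀ - w‖) ^ k
      ≤ ‖iteratedFDeriv ℝ n f (x - w)‖ * (2 * (1 + ‖x - w‖)) ^ k := by gcongr
    _ = 2 ^ k * ((1 + ‖x - w‖) ^ k * ‖iteratedFDeriv ℝ n f (x - w)‖) := by rw [mul_pow]; ring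
    _ ≤ 2 ^ k * M := by gcongr; exact hM _

variable [FiniteDimensional ℝ E] [MeasurableSpace E] [BorelSpace E] {μ : Measure E}
  [μ.IsAddHaarMeasure]

theorem hasFTaylorSeriesUpTo_integral_smul_schwartz {φ : E → ℝ} {K : ℝ}
    (hφ : AEStronglyMeasurable φ μ) (hK : ∀ x, |φ x| ≤ K) :
    HasFTaylorSeriesUpTo ∞ (fun x => ∫ w, φ w • f (x - w) ∂μ)
      (fun x n => ∫ w, φ w • iteratedFDeriv ℝ n f (x - w) ∂μ) := by
  have hsmooth (w : E) : ContDiff ℝ ∞ fun x => f (x - w) :=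
    f.smooth'.comp (contDiff_id.sub contDiff_const)
  have hderiv (n : ℕ) (w x : E) : iteratedFDeriv ℝ n (fun x => φ w • f (x - w)) x =
      φ w • iteratedFDeriv ℝ n f (x - w) := by
    rw [iteratedFDeriv_const_smul_apply' ((hsmooth w).contDiffAt.of_le (mod_cast le_top)),
      iteratedFDeriv_comp_sub]
  simp only [← hderiv]
  refine hasFTaylorSeriesUpTo_integral_of_dominated (fun w => contDiff_const.smul (hsmooth w))
    (fun n x => ?_) (fun n x₀ => ?_)
  · simp only [hderiv]
    exact hφ.smul (((f.smooth n).continuous_iteratedFDeriv le_rfl).comp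
      (continuous_const.sub continuous_id)).aestronglyMeasurable
  · obtain ⟨M, hM⟩ := exists_norm_iteratedFDeriv_sub_le_on_ball f n (Module.finrank ℝ E + 1)
    have hint := (integrable_one_add_norm (E := E) (μ := μ)
      (r := (Module.finrank ℝ E + 1 : ℕ)) (by simp)).comp_sub_left x₀
    refine ⟨_, (hint.const_mul M).const_mul K, .of_forall fun w x hx => ?_⟩
    rw [hderiv, norm_smul]
    exact mul_le_mul (hK w) (hM x₀ w x hx) (norm_nonneg _) ((abs_nonneg _).trans (hK w))

theorem integrable_iteratedFDeriv_schwartz (n : ℕ) : Integrable (iteratedFDeriv ℝ n f) μ :=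
  (integrable_norm_iff ((f.smooth n).continuous_iteratedFDeriv le_rfl).aestronglyMeasurable).1
    (by simpa using f.integrable_pow_mul_iteratedFDeriv μ 0 n)

theorem integral_iteratedFDeriv_schwartz_eq_zero {n : ℕ} (hn : n ≠ 0) :
    ∫ y, iteratedFDeriv ℝ n f y ∂μ = 0 := by
  have h := (hasFTaylorSeriesUpTo_integral_smul_schwartz (μ := μ) (φ := fun _ => 1) (K := 1) f
    aestronglyMeasurable_const (by simp)).eq_iteratedFDeriv (m := n) (mod_cast le_top) 0
  simp only [one_smul, integral_sub_left_eq_self (μ := μ)] at h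
  rw [h, iteratedFDeriv_const_of_ne hn]
  rfl

theorem integrable_rpow_norm_mul_iteratedFDeriv_schwartz (n : ℕ) {β : ℝ} (hβ : 0 ≤ β) :
    Integrable (fun y => ‖y‖ ^ β * ‖iteratedFDeriv ℝ n f y‖) μ := by
  have hcont : Continuous (iteratedFDeriv ℝ n f) := (f.smooth n).continuous_iteratedFDeriv le_rfl
  refine ((integrable_iteratedFDeriv_schwartz f n).norm.add
    (f.integrable_pow_mul_iteratedFDeriv μ ⌈β⌉₊ n)).mono'
    ((continuous_norm.rpow_const fun _ => .inr hβ).mul hcont.norm).aestronglyMeasurable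
    (.of_forall fun y => ?_)
  have hpow : ‖y‖ ^ β ≤ 1 + ‖y‖ ^ ⌈β⌉₊ := by
    rcases le_total ‖y‖ 1 with h | h
    · exact (Real.rpow_le_one (norm_nonneg y) h hβ).trans (le_add_of_nonneg_right (by positivity))
    · rw [← Real.rpow_natCast]
      exact (Real.rpow_le_rpow_of_exponent_le h (Nat.le_ceil β)).trans
        (le_add_of_nonneg_left zero_le_one)
  rw [Real.norm_of_nonneg (by positivity)]
  calc ‖y‖ ^ β * ‖iteratedFDeriv ℝ n f y‖
      ≤ (1 + ‖y‖ ^ ⌈β⌉₊) * ‖iteratedFDeriv ℝ n f y‖ := by gcongr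
    _ = _ := by simp only [Pi.add_apply]; ring

-- Since `Dⁿf` has mean zero, `φ w` may be replaced by `φ w - φ x` in `∫ φ w • Dⁿf (x - w)`.
theorem norm_iteratedFDeriv_integral_smul_schwartz_le {φ : E → ℝ} {K H β : ℝ} {n : ℕ}
    (hφ : AEStronglyMeasurable φ μ) (hK : ∀ x, |φ x| ≤ K) (hβ : 0 ≤ β)
    (hH : ∀ x y, |φ x - φ y| ≤ H * ‖x - y‖ ^ β) (hn : n ≠ 0) (x : E) :
    ‖iteratedFDeriv ℝ n (fun x => ∫ w, φ w • f (x - w) ∂μ) x‖ ≤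
      H * ∫ y, ‖y‖ ^ β * ‖iteratedFDeriv ℝ n f y‖ ∂μ := by
  have hf := integrable_iteratedFDeriv_schwartz (μ := μ) f n
  rw [← (hasFTaylorSeriesUpTo_integral_smul_schwartz f hφ hK).eq_iteratedFDeriv
    (m := n) (mod_cast le_top)]
  have hcenter : ∫ w, φ w • iteratedFDeriv ℝ n f (x - w) ∂μ =
      ∫ w, (φ w - φ x) • iteratedFDeriv ℝ n f (x - w) ∂μ := by
    simp_rw [sub_smul]
    rw [integral_sub (by exact (hf.comp_sub_left x).bdd_smul K hφ (.of_forall hK))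
      (by exact (hf.comp_sub_left x).smul (φ x)), integral_smul,
      integral_sub_left_eq_self (iteratedFDeriv ℝ n f),
      integral_iteratedFDeriv_schwartz_eq_zero f hn, smul_zero, sub_zero]
  rw [hcenter, ← integral_sub_left_eq_self _ μ x, ← integral_const_mul]
  simp only [sub_sub_cancel]
  refine norm_integral_le_of_norm_le
    ((integrable_rpow_norm_mul_iteratedFDeriv_schwartz f n hβ).const_mul H)
    (.of_forall fun y => ?_)
  rw [norm_smul, Real.norm_eq_abs, ← mul_assoc]
  gcongr
  simpa using hH (x - y) x

end SchwartzKernel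

section SchwartzDilation

variable {E V : Type*} [NormedAddCommGroup E] [NormedSpace ℝ E]
  [NormedAddCommGroup V] [NormedSpace ℝ V] {ρ : ℝ} (hρ : 0 < ρ) (f : 𝓢(E, V))

/-- The dilation of a Schwartz function to the length scale `ρ`, normalized to preserve its
integral. -/
noncomputable def schwartzDilate : 𝓢(E, V) :=
  (ρ ^ Module.finrank ℝ E)⁻¹ • SchwartzMap.compCLMOfContinuousLinearEquiv ℝ
    (ContinuousLinearEquiv.smulLeft (M₁ := E) (Units.mk0 ρ⁻¹ (inv_ne_zero hρ.ne'))) f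

theorem schwartzDilate_apply (x : E) :
    schwartzDilate hρ f x = (ρ ^ Module.finrank ℝ E)⁻¹ • f (ρ⁻¹ • x) := rfl

theorem norm_iteratedFDeriv_schwartzDilate (n : ℕ) (x : E) :
    ‖iteratedFDeriv ℝ n (schwartzDilate hρ f) x‖ =
      (ρ ^ Module.finrank ℝ E)⁻¹ * (ρ⁻¹ ^ n * ‖iteratedFDeriv ℝ n f (ρ⁻¹ • x)‖) := by
  have hdilate : ContDiff ℝ n fun x => f (ρ⁻¹ • x) := (f.smooth n).comp (contDiff_const_smul _)
  change ‖iteratedFDeriv ℝ n (fun x => (ρ ^ Module.finrank ℝ E)⁻¹ • f (ρ⁻¹ • x)) x‖ = _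
  rw [iteratedFDeriv_const_smul_apply' hdilate.contDiffAt,
    iteratedFDeriv_comp_const_smul _ (f.smooth n), norm_smul, norm_smul,
    Real.norm_of_nonneg (by positivity), Real.norm_of_nonneg (by positivity)]

variable [FiniteDimensional ℝ E] [MeasurableSpace E] [BorelSpace E] {μ : Measure E}
  [μ.IsAddHaarMeasure]

theorem integral_rpow_norm_mul_iteratedFDeriv_schwartzDilate (n : ℕ) (β : ℝ) :
    ∫ y, ‖y‖ ^ β * ‖iteratedFDeriv ℝ n (schwartzDilate hρ f) y‖ ∂μ =
      ρ ^ (β - n) * ∫ y, ‖y‖ ^ β * ‖iteratedFDeriv ℝ n f y‖ ∂μ := by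
  have h := Measure.integral_comp_smul_of_nonneg μ
    (fun y => ‖y‖ ^ β * ‖iteratedFDeriv ℝ n f y‖) ρ⁻¹ (hR := by positivity)
  rw [inv_pow, inv_inv, smul_eq_mul, ← inv_mul_eq_iff_eq_mul₀ (by positivity)] at h
  rw [← h, ← integral_const_mul, ← integral_const_mul]
  congr with y
  rw [norm_iteratedFDeriv_schwartzDilate, norm_smul, Real.norm_of_nonneg (by positivity),
    Real.mul_rpow (by positivity) (norm_nonneg y), Real.inv_rpow hρ.le, Real.rpow_sub hρ,
    Real.rpow_natCast, inv_pow]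
  field_simp

end SchwartzDilation

section LevyExponent

theorem abs_iteratedDeriv_one_sub_cos_le (n : ℕ) (s : ℝ) :
    |iteratedDeriv n (fun s => 1 - Real.cos s) s| ≤ |s| ^ (2 - n) := by
  rcases n with _ | _ | n
  · rw [iteratedDeriv_zero, abs_of_nonneg (sub_nonneg.2 (Real.cos_le_one s)), sq_abs]
    linarith [Real.one_sub_sq_div_two_le_cos (x := s), sq_nonneg s]
  · simpa [iteratedDeriv_one] using Real.abs_sin_le_abs (x := s)
  · rw [iteratedDeriv_const_sub (by lia), iteratedDeriv_neg, abs_neg]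
    simpa using Real.abs_iteratedDeriv_cos_le_one (n + 2) s

variable {E : Type*} [NormedAddCommGroup E] [InnerProductSpace ℝ E]

theorem iteratedFDeriv_comp_inner {g : ℝ → ℝ} (hg : ContDiff ℝ ∞ g) (n : ℕ) (u y : E) :
    iteratedFDeriv ℝ n (fun u => g ⟪u, y⟫) u =
      (iteratedFDeriv ℝ n g ⟪u, y⟫).compContinuousLinearMap fun _ => innerSL ℝ y := by
  simp only [← real_inner_comm _ y]
  exact (innerSL ℝ y).iteratedFDeriv_comp_right hg u (i := n) (mod_cast le_top)

theorem continuous_iteratedFDeriv_comp_inner {g : ℝ → ℝ} (hg : ContDiff ℝ ∞ g) (n : ℕ) (u : E) :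
    Continuous fun y => iteratedFDeriv ℝ n (fun u => g ⟪u, y⟫) u := by
  simp only [iteratedFDeriv_comp_inner hg]
  have hprecomp : Continuous fun y : E =>
      ContinuousMultilinearMap.compContinuousLinearMapContinuousMultilinear ℝ
        (fun _ : Fin n => E) (fun _ => ℝ) ℝ fun _ => innerSL ℝ y :=
    (ContinuousMultilinearMap.cont _).comp (continuous_pi fun _ => (innerSL ℝ).continuous)
  exact hprecomp.clm_apply ((hg.continuous_iteratedFDeriv (mod_cast le_top)).comp
    (continuous_const.inner continuous_id))

theorem norm_iteratedFDeriv_one_sub_cos_inner_le (n : ℕ) (u y : E) :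
    ‖iteratedFDeriv ℝ n (fun u => 1 - Real.cos ⟪u, y⟫) u‖ ≤ (1 + ‖u‖) ^ 2 * ‖y‖ ^ max n 2 := by
  rw [iteratedFDeriv_comp_inner (g := fun s => 1 - Real.cos s)
    (contDiff_const.sub Real.contDiff_cos)]
  calc _ ≤ ‖iteratedFDeriv ℝ n (fun s => 1 - Real.cos s) ⟪u, y⟫‖ * ‖y‖ ^ n := by
        simpa using ContinuousMultilinearMap.norm_compContinuousLinearMap_le
          (iteratedFDeriv ℝ n (fun s => 1 - Real.cos s) ⟪u, y⟫) fun _ => innerSL ℝ y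
    _ ≤ (‖u‖ * ‖y‖) ^ (2 - n) * ‖y‖ ^ n := by
        rw [norm_iteratedFDeriv_eq_norm_iteratedDeriv]
        gcongr
        exact (abs_iteratedDeriv_one_sub_cos_le n _).trans
          (pow_le_pow_left₀ (abs_nonneg _) (abs_real_inner_le_norm u y) _)
    _ = ‖u‖ ^ (2 - n) * ‖y‖ ^ max n 2 := by
        rw [mul_pow, mul_assoc, ← pow_add, max_comm, Nat.sub_add_eq_max]
    _ ≤ (1 + ‖u‖) ^ 2 * ‖y‖ ^ max n 2 := by
        have : ‖u‖ ^ (2 - n) ≤ (1 + ‖u‖) ^ (2 - n) := by gcongr; linarith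
        gcongr
        exact this.trans (pow_le_pow_right₀ (by linarith [norm_nonneg u]) (Nat.sub_le 2 n))

variable [MeasurableSpace E]

/-- The characteristic exponent of the symmetric Lévy process with jump measure `ν`; the jumps
enter only through their even part, so `ν` need not be symmetric. -/
noncomputable def levyExponent (ν : Measure E) (u : E) : ℝ :=
  ∫ y, (1 - Real.cos ⟪u, y⟫) ∂ν

theorem levyExponent_nonneg (ν : Measure E) (u : E) : 0 ≤ levyExponent ν u :=
  integral_nonneg fun _ => sub_nonneg.2 (Real.cos_le_one _)

theorem levyExponent_smul_measure {c : ℝ} (hc : 0 ≤ c) (ν : Measure E) (u : E) :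
    levyExponent (ENNReal.ofReal c • ν) u = c * levyExponent ν u := by
  simp only [levyExponent, integral_smul_measure, ENNReal.toReal_ofReal hc, smul_eq_mul]

variable [FiniteDimensional ℝ E] [BorelSpace E] {ν : Measure E}

theorem integrable_one_sub_cos_inner (hν : Integrable (fun y => ‖y‖ ^ 2) ν) (u : E) :
    Integrable (fun y => 1 - Real.cos ⟪u, y⟫) ν :=
  (hν.const_mul ((1 + ‖u‖) ^ 2)).mono' (by fun_prop) (.of_forall fun y => by
    simpa using norm_iteratedFDeriv_one_sub_cos_inner_le 0 u y)

theorem levyExponent_restrict_add_compl (hν : Integrable (fun y => ‖y‖ ^ 2) ν) {s : Set E}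
    (hs : MeasurableSet s) (u : E) :
    levyExponent (ν.restrict s) u + levyExponent (ν.restrict sᶜ) u = levyExponent ν u :=
  integral_add_compl hs (integrable_one_sub_cos_inner hν u)

theorem hasTemperateGrowth_levyExponent
    (hν : ∀ n : ℕ, 2 ≤ n → Integrable (fun y => ‖y‖ ^ n) ν) :
    (levyExponent ν).HasTemperateGrowth := by
  have hcos : ContDiff ℝ ∞ fun s => 1 - Real.cos s := contDiff_const.sub Real.contDiff_cos
  have hseries := hasFTaylorSeriesUpTo_integral_of_dominated (μ := ν)
    (F := fun u y => 1 - Real.cos ⟪u, y⟫)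
    (fun y => hcos.comp (contDiff_id.inner ℝ contDiff_const))
    (fun n u => (continuous_iteratedFDeriv_comp_inner hcos n u).aestronglyMeasurable)
    (fun n u₀ => ⟨fun y => (1 + (‖u₀‖ + 1)) ^ 2 * ‖y‖ ^ max n 2,
      (hν _ (le_max_right n 2)).const_mul _, .of_forall fun y u hu =>
        (norm_iteratedFDeriv_one_sub_cos_inner_le n u y).trans ?_⟩)
  · refine ⟨hseries.contDiff, fun n => ⟨2, ∫ y, ‖y‖ ^ max n 2 ∂ν, fun u => ?_⟩⟩
    have hn := hseries.eq_iteratedFDeriv (m := n) (mod_cast le_top) u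
    change ‖iteratedFDeriv ℝ n (fun u => ∫ y, (1 - Real.cos ⟪u, y⟫) ∂ν) u‖ ≤ _
    rw [← hn, mul_comm, ← integral_const_mul]
    exact norm_integral_le_of_norm_le ((hν _ (le_max_right n 2)).const_mul _)
      (.of_forall (norm_iteratedFDeriv_one_sub_cos_inner_le n u))
  · have : ‖u‖ ≤ ‖u₀‖ + 1 := by
      linarith [norm_le_norm_add_norm_sub' u u₀, mem_ball_iff_norm.1 hu]
    change _ ≤ (1 + (‖u₀‖ + 1)) ^ 2 * ‖y‖ ^ max n 2
    gcongr

end LevyExponent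

section SchwartzExp

variable {E : Type*} [NormedAddCommGroup E] [NormedSpace ℝ E] {Ψ : E → ℝ}

theorem norm_iteratedFDeriv_exp_neg_le_of_hasTemperateGrowth (hΨ : Ψ.HasTemperateGrowth) (n : ℕ) :
    ∃ (m : ℕ) (D : ℝ), 0 ≤ D ∧ ∀ u,
      ‖iteratedFDeriv ℝ n (fun u => Real.exp (-Ψ u)) u‖ ≤ D * (1 + ‖u‖) ^ m * Real.exp (-Ψ u) := by
  obtain ⟨m, M, hM₀, hM⟩ := hΨ.norm_iteratedFDeriv_le_uniform n
  refine ⟨m * n, n.factorial * (1 + M) ^ n, by positivity, fun u => ?_⟩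
  have hexp (i : ℕ) (_ : i ≤ n) :
      ‖iteratedFDeriv ℝ i (fun s : ℝ => Real.exp (-s)) (Ψ u)‖ ≤ Real.exp (-Ψ u) := by
    have := iteratedDeriv_exp_const_mul i (-1)
    simp only [neg_one_mul] at this
    rw [norm_iteratedFDeriv_eq_norm_iteratedDeriv, this]
    simp
  have hΨu (i : ℕ) (hi₁ : 1 ≤ i) (hi : i ≤ n) :
      ‖iteratedFDeriv ℝ i Ψ u‖ ≤ ((1 + M) * (1 + ‖u‖) ^ m) ^ i := by
    have hu : 1 ≤ (1 + ‖u‖) ^ m := one_le_pow₀ (by linarith [norm_nonneg u])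
    calc ‖iteratedFDeriv ℝ i Ψ u‖ ≤ M * (1 + ‖u‖) ^ m := hM i hi u
      _ ≤ (1 + M) * (1 + ‖u‖) ^ m := by gcongr; linarith
      _ ≤ _ := le_self_pow₀ (by nlinarith) (by lia)
  refine (norm_iteratedFDeriv_comp_le (N := ∞) (Real.contDiff_exp.comp contDiff_neg) hΨ.1
    (mod_cast le_top) u hexp hΨu).trans_eq ?_
  rw [mul_pow, ← pow_mul]
  ring

theorem exists_schwartzMap_eq_exp_neg (hΨ : Ψ.HasTemperateGrowth)
    (hdecay : ∀ k : ℕ, ∃ C, ∀ u, (1 + ‖u‖) ^ k * Real.exp (-Ψ u) ≤ C) :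
    ∃ f : 𝓢(E, ℝ), ∀ u, f u = Real.exp (-Ψ u) := by
  refine ⟨⟨fun u => Real.exp (-Ψ u), Real.contDiff_exp.comp hΨ.1.neg, fun k n => ?_⟩,
    fun u => rfl⟩
  obtain ⟨m, D, hD, hbound⟩ := norm_iteratedFDeriv_exp_neg_le_of_hasTemperateGrowth hΨ n
  obtain ⟨C, hC⟩ := hdecay (k + m)
  refine ⟨D * C, fun u => ?_⟩
  calc ‖u‖ ^ k * ‖iteratedFDeriv ℝ n (fun u => Real.exp (-Ψ u)) u‖
      ≤ (1 + ‖u‖) ^ k * (D * (1 + ‖u‖) ^ m * Real.exp (-Ψ u)) := by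
        gcongr
        · linarith
        · exact hbound u
    _ = D * ((1 + ‖u‖) ^ (k + m) * Real.exp (-Ψ u)) := by rw [pow_add]; ring
    _ ≤ D * C := by gcongr; exact hC u

end SchwartzExp

section Symmetry

variable {G : Type*} [MeasurableSpace G] [InvolutiveNeg G] [MeasurableNeg G] {μ : Measure G}
  [μ.IsNegInvariant]

theorem isNegInvariant_restrict_of_neg_eq {s : Set G} (hs : MeasurableSet s) (hneg : -s = s) :
    (μ.restrict s).IsNegInvariant where
  neg_eq_self := by
    have h := (Measure.measurePreserving_neg μ).restrict_preimage hs
    rw [Set.neg_preimage, hneg] at h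
    exact h.map_eq

theorem isNegInvariant_smul_measure (c : ENNReal) : (c • μ).IsNegInvariant where
  neg_eq_self := by
    ext s
    rw [Measure.neg_apply, Measure.smul_apply, Measure.smul_apply, Measure.measure_neg]

theorem isNegInvariant_withDensity_of_even {f : G → ENNReal} (hf : ∀ y, f (-y) = f y) :
    (μ.withDensity f).IsNegInvariant where
  neg_eq_self := by
    ext s hs
    rw [Measure.neg_apply, withDensity_apply _ hs, withDensity_apply _ hs.neg]
    have h := (Measure.measurePreserving_neg μ).setLIntegral_comp_preimage_emb
      (MeasurableEquiv.neg G).measurableEmbedding f s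
    simpa only [hf, Set.neg_preimage] using h

end Symmetry

theorem isFiniteMeasure_restrict_compl_closedBall {E : Type*} [NormedAddCommGroup E]
    [MeasurableSpace E] {ν : Measure E} (hν : Integrable (fun y => ‖y‖ ^ 2) ν) {ρ : ℝ}
    (hρ : 0 < ρ) : IsFiniteMeasure (ν.restrict (closedBall 0 ρ)ᶜ) := by
  refine isFiniteMeasure_restrict.2 ((measure_mono fun y hy => ?_).trans_lt
    (hν.measure_ge_lt_top (pow_pos hρ 2))).ne
  have : ρ < ‖y‖ := by simpa using hy
  exact pow_le_pow_left₀ hρ.le this.le 2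

theorem exists_mem_ball_cos_inner_lt_one {E : Type*} [NormedAddCommGroup E] [InnerProductSpace ℝ E]
    {R : ℝ} (hR : 0 < R) {u : E} (hu : u ≠ 0) : ∃ y ∈ ball (0 : E) R, Real.cos ⟪u, y⟫ < 1 := by
  have hray : Filter.Tendsto (fun s : ℝ => s • u) (nhdsWithin 0 (Set.Ioi 0)) (nhds 0) := by
    have : Continuous fun s : ℝ => s • u := by fun_prop
    simpa using (this.tendsto 0).mono_left nhdsWithin_le_nhds
  have hsmall : ∀ᶠ y in nhds (0 : E), ⟪u, y⟫ < Real.pi :=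
    (isOpen_lt (by fun_prop : Continuous fun y => ⟪u, y⟫) continuous_const).mem_nhds
      (by simpa using Real.pi_pos)
  obtain ⟨s, ⟨hπ, hs_ball⟩, hs⟩ := ((hray.eventually (hsmall.and (ball_mem_nhds 0 hR))).and
    self_mem_nhdsWithin).exists
  have hs₀ : 0 < ⟪u, s • u⟫ := by
    rw [real_inner_smul_right]
    exact mul_pos hs (real_inner_self_pos.2 hu)
  exact ⟨s • u, hs_ball, by simpa using Real.cos_lt_cos_of_nonneg_of_le_pi le_rfl hπ.le hs₀⟩

section TruncatedStable

variable {E : Type*} [NormedAddCommGroup E] [InnerProductSpace ℝ E] [FiniteDimensional ℝ E]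
  [MeasurableSpace E] [BorelSpace E] {α R : ℝ}

/-- The Lévy measure `|y|^{-(dim E + α)} dy` of the isotropic `α`-stable process, truncated to jumps
of length at most `R`. -/
noncomputable def truncatedStable (E : Type*) [NormedAddCommGroup E] [InnerProductSpace ℝ E]
    [FiniteDimensional ℝ E] [MeasurableSpace E] [BorelSpace E] (α R : ℝ) : Measure E :=
  (volume.restrict (closedBall 0 R)).withDensity fun y =>
    ENNReal.ofReal (‖y‖ ^ (Module.finrank ℝ E + α))⁻¹

theorem levyExponent_truncatedStable (u : E) :
    levyExponent (truncatedStable E α R) u =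
      ∫ y in closedBall 0 R, (1 - Real.cos ⟪u, y⟫) / ‖y‖ ^ (Module.finrank ℝ E + α) := by
  rw [levyExponent, truncatedStable, integral_withDensity_eq_integral_toReal_smul (by fun_prop)
    (by simp)]
  congr with y
  rw [ENNReal.toReal_ofReal (by positivity), smul_eq_mul, div_eq_inv_mul]

theorem restrict_truncatedStable {ρ : ℝ} (h : ρ ≤ R) :
    (truncatedStable E α R).restrict (closedBall 0 ρ) = truncatedStable E α ρ := by
  rw [truncatedStable, restrict_withDensity measurableSet_closedBall,
    Measure.restrict_restrict measurableSet_closedBall,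
    Set.inter_eq_self_of_subset_left (closedBall_subset_closedBall h), truncatedStable]

instance isNegInvariant_truncatedStable : (truncatedStable E α R).IsNegInvariant :=
  have := isNegInvariant_restrict_of_neg_eq (μ := (volume : Measure E))
    (measurableSet_closedBall (x := 0) (ε := R)) (by simp)
  isNegInvariant_withDensity_of_even fun y => by rw [norm_neg]

theorem levyExponent_truncatedStable_scale {ρ : ℝ} (hρ : 0 < ρ) (u : E) :
    levyExponent (truncatedStable E α ρ) u =
      ρ ^ (-α) * levyExponent (truncatedStable E α 1) (ρ • u) := by
  have h := Measure.setIntegral_comp_smul_of_pos (volume : Measure E)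
    (fun y => (1 - Real.cos ⟪u, y⟫) / ‖y‖ ^ (Module.finrank ℝ E + α)) (closedBall 0 1) hρ
  rw [_root_.smul_closedBall _ _ zero_le_one, smul_zero, mul_one, Real.norm_of_nonneg hρ.le,
    ← levyExponent_truncatedStable] at h
  have hintegrand (y : E) : (1 - Real.cos ⟪u, ρ • y⟫) / ‖ρ • y‖ ^ (Module.finrank ℝ E + α) =
      (ρ ^ (Module.finrank ℝ E + α))⁻¹ *
        ((1 - Real.cos ⟪ρ • u, y⟫) / ‖y‖ ^ (Module.finrank ℝ E + α)) := by
    rw [real_inner_smul_left, real_inner_smul_right, norm_smul, Real.norm_of_nonneg hρ.le,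
      Real.mul_rpow hρ.le (norm_nonneg y)]
    ring
  simp_rw [hintegrand] at h
  rw [integral_const_mul, ← levyExponent_truncatedStable, smul_eq_mul,
    Real.rpow_add hρ, Real.rpow_natCast, mul_inv, mul_assoc] at h
  rw [Real.rpow_neg hρ.le]
  exact (mul_left_cancel₀ (by positivity) h).symm

theorem levyExponent_truncatedStable_eq_small_add_large {ρ : ℝ}
    (hν : Integrable (fun y => ‖y‖ ^ 2) (truncatedStable E α 1)) (hρ : 0 < ρ)
    (hρ₁ : ρ ≤ 1) (u : E) :
    levyExponent (truncatedStable E α 1) u =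
      ρ ^ (-α) * levyExponent (truncatedStable E α 1) (ρ • u) +
        levyExponent ((truncatedStable E α 1).restrict (closedBall 0 ρ)ᶜ) u := by
  rw [← levyExponent_restrict_add_compl hν measurableSet_closedBall, restrict_truncatedStable hρ₁,
    levyExponent_truncatedStable_scale hρ]

variable [Nontrivial E]

theorem integrable_norm_pow_truncatedStable {n : ℕ} (hn : α < n) :
    Integrable (fun y => ‖y‖ ^ n) (truncatedStable E α R) := by
  rw [truncatedStable, integrable_withDensity_iff_integrable_smul' (by fun_prop) (by simp)]
  simp only [ENNReal.toReal_ofReal (inv_nonneg.2 (Real.rpow_nonneg (norm_nonneg _) _))]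
  refine IntegrableOn.mono_set ?_ (closedBall_subset_ball ((le_abs_self R).trans_lt (lt_add_one _)))
  refine (integrableOn_fun_norm_addHaar volume
    (f := fun r : ℝ => (r ^ (Module.finrank ℝ E + α))⁻¹ • r ^ n)).2 ?_
  have hpow : IntegrableOn (fun r : ℝ => r ^ (n - 1 - α)) (Set.Ioo 0 (|R| + 1)) :=
    (intervalIntegral.integrableOn_Ioo_rpow_iff (by positivity)).2 (by linarith)
  refine hpow.congr_fun (fun r hr => ?_) measurableSet_Ioo
  have hr₀ : 0 < r := hr.1
  simp only [smul_eq_mul]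
  rw [← Real.rpow_natCast, ← Real.rpow_natCast, ← Real.rpow_neg hr₀.le, ← Real.rpow_add hr₀,
    ← Real.rpow_add hr₀, Nat.cast_sub Module.finrank_pos]
  congr 1
  push_cast
  ring

theorem integrable_norm_pow_truncatedStable_of_two_le (hα : α < 2) {n : ℕ} (hn : 2 ≤ n) :
    Integrable (fun y => ‖y‖ ^ n) (truncatedStable E α R) :=
  integrable_norm_pow_truncatedStable (hα.trans_le (mod_cast hn))

theorem levyExponent_truncatedStable_pos (hα : α < 2) (hR : 0 < R) {u : E} (hu : u ≠ 0) :
    0 < levyExponent (truncatedStable E α R) u := by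
  have hint := integrable_one_sub_cos_inner
    (integrable_norm_pow_truncatedStable_of_two_le (E := E) (R := R) hα le_rfl) u
  rw [truncatedStable, integrable_withDensity_iff_integrable_smul' (by fun_prop) (by simp)] at hint
  simp only [ENNReal.toReal_ofReal (inv_nonneg.2 (Real.rpow_nonneg (norm_nonneg _) _)),
    smul_eq_mul, ← div_eq_inv_mul] at hint
  have hnonneg (y : E) : 0 ≤ (1 - Real.cos ⟪u, y⟫) / ‖y‖ ^ (Module.finrank ℝ E + α) :=
    div_nonneg (sub_nonneg.2 (Real.cos_le_one _)) (Real.rpow_nonneg (norm_nonneg _) _)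
  rw [levyExponent_truncatedStable,
    setIntegral_pos_iff_support_of_nonneg_ae (.of_forall hnonneg) hint]
  have hopen : IsOpen ({y | Real.cos ⟪u, y⟫ < 1} ∩ ball 0 R) :=
    (isOpen_lt (by fun_prop) continuous_const).inter isOpen_ball
  obtain ⟨y₀, hy₀R, hy₀⟩ := exists_mem_ball_cos_inner_lt_one hR hu
  refine (hopen.measure_pos volume ⟨y₀, hy₀, hy₀R⟩).trans_le (measure_mono fun y hy => ?_)
  have hy₀ : y ≠ 0 := by
    rintro rfl
    simp at hy
  exact ⟨(div_pos (sub_pos.2 hy.1) (Real.rpow_pos_of_pos (norm_pos_iff.2 hy₀) _)).ne',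
    ball_subset_closedBall hy.2⟩

theorem exists_le_levyExponent_truncatedStable (hα₀ : 0 < α) (hα : α < 2) :
    ∃ c, 0 < c ∧ ∀ u : E, c * (‖u‖ ^ α - 1) ≤ levyExponent (truncatedStable E α 1) u := by
  have hν (n : ℕ) (hn : 2 ≤ n) := integrable_norm_pow_truncatedStable_of_two_le (E := E) (R := 1)
    hα hn
  obtain ⟨e, he, hmin⟩ := (isCompact_sphere (0 : E) 1).exists_isMinOn
    (NormedSpace.sphere_nonempty.2 zero_le_one)
    (hasTemperateGrowth_levyExponent hν).1.continuous.continuousOn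
  have hpos := levyExponent_truncatedStable_pos hα one_pos (ne_zero_of_mem_unit_sphere ⟨e, he⟩)
  refine ⟨_, hpos, fun u => ?_⟩
  rcases le_total ‖u‖ 1 with h | h
  · exact (mul_nonpos_of_nonneg_of_nonpos hpos.le
      (sub_nonpos.2 (Real.rpow_le_one (norm_nonneg u) h hα₀.le))).trans (levyExponent_nonneg _ u)
  · have hu : 0 < ‖u‖ := one_pos.trans_le h
    have hunit : ‖u‖⁻¹ • u ∈ sphere (0 : E) 1 := by simp [norm_smul, hu.ne']
    calc levyExponent (truncatedStable E α 1) e * (‖u‖ ^ α - 1)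
        ≤ levyExponent (truncatedStable E α 1) (‖u‖⁻¹ • u) * ‖u‖ ^ α :=
          mul_le_mul (hmin hunit) (sub_le_self _ zero_le_one)
            (sub_nonneg.2 (Real.one_le_rpow h hα₀.le)) (levyExponent_nonneg _ _)
      _ = ‖u‖⁻¹ ^ (-α) * levyExponent (truncatedStable E α 1) (‖u‖⁻¹ • u) := by
          rw [Real.inv_rpow hu.le, Real.rpow_neg hu.le, inv_inv, mul_comm]
      _ ≤ levyExponent (truncatedStable E α 1) u := by
          rw [levyExponent_truncatedStable_eq_small_add_large (hν 2 le_rfl) (inv_pos.2 hu)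
            (inv_le_one_of_one_le₀ h) u]
          exact le_add_of_nonneg_right (levyExponent_nonneg _ _)

end TruncatedStable

section StretchedExponential

variable {E : Type*} [NormedAddCommGroup E]

theorem exists_one_add_norm_pow_mul_exp_neg_le {Ψ : E → ℝ} {α c : ℝ} (hα : 0 < α) (hc : 0 < c)
    (hΨ : ∀ u, c * (‖u‖ ^ α - 1) ≤ Ψ u) (k : ℕ) :
    ∃ C, ∀ u, (1 + ‖u‖) ^ k * Real.exp (-Ψ u) ≤ C := by
  obtain ⟨N, hN⟩ := exists_nat_ge (k / α)
  have hpow (u : E) : (1 + ‖u‖) ^ k ≤ 2 ^ k * (1 + ‖u‖ ^ α) ^ N := by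
    have hkN : (k : ℝ) ≤ α * N := by rwa [div_le_iff₀' hα] at hN
    rcases le_total ‖u‖ 1 with h | h
    · have : 1 ≤ (1 + ‖u‖ ^ α) ^ N := one_le_pow₀ (le_add_of_nonneg_right (by positivity))
      calc (1 + ‖u‖) ^ k ≤ 2 ^ k * 1 := by rw [mul_one]; gcongr; linarith
        _ ≤ _ := by gcongr
    · have : ‖u‖ ^ k ≤ (1 + ‖u‖ ^ α) ^ N :=
        calc ‖u‖ ^ k ≤ (‖u‖ ^ α) ^ N := by
              rw [← Real.rpow_natCast, ← Real.rpow_mul_natCast (norm_nonneg u)]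
              exact Real.rpow_le_rpow_of_exponent_le h hkN
          _ ≤ _ := by gcongr; linarith
      calc (1 + ‖u‖) ^ k ≤ (2 * ‖u‖) ^ k := by gcongr; linarith
        _ ≤ _ := by rw [mul_pow]; gcongr
  refine ⟨2 ^ k * (N.factorial / c ^ N * Real.exp (2 * c)), fun u => ?_⟩
  have hfactorial := Real.pow_div_factorial_le_exp (x := c * (1 + ‖u‖ ^ α)) (by positivity) N
  have hexp : (1 + ‖u‖ ^ α) ^ N ≤ N.factorial / c ^ N * Real.exp (c * (1 + ‖u‖ ^ α)) := by
    rw [mul_pow, div_le_iff₀ (by positivity)] at hfactorial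
    rw [div_mul_eq_mul_div, le_div_iff₀ (by positivity)]
    linarith
  calc (1 + ‖u‖) ^ k * Real.exp (-Ψ u)
      ≤ 2 ^ k * (N.factorial / c ^ N * Real.exp (c * (1 + ‖u‖ ^ α))) *
          Real.exp (c - c * ‖u‖ ^ α) := by
        gcongr
        · exact (hpow u).trans (by gcongr)
        · linarith [hΨ u]
    _ = 2 ^ k * (N.factorial / c ^ N * Real.exp (2 * c)) := by
        rw [mul_assoc, mul_assoc, ← Real.exp_add]
        ring_nf

end StretchedExponential

theorem exists_schwartzMap_eq_exp_neg_levyExponent_truncatedStable {E : Type*}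
    [NormedAddCommGroup E] [InnerProductSpace ℝ E] [FiniteDimensional ℝ E] [MeasurableSpace E]
    [BorelSpace E] [Nontrivial E] {α T : ℝ} (hα₀ : 0 < α) (hα : α < 2) (hT : 0 < T) :
    ∃ f : 𝓢(E, ℝ), ∀ u, f u = Real.exp (-(T * levyExponent (truncatedStable E α 1) u)) := by
  obtain ⟨c, hc, hlower⟩ := exists_le_levyExponent_truncatedStable (E := E) hα₀ hα
  refine exists_schwartzMap_eq_exp_neg ((Function.HasTemperateGrowth.const T).mul
    (hasTemperateGrowth_levyExponent fun n => integrable_norm_pow_truncatedStable_of_two_le hα))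
    (exists_one_add_norm_pow_mul_exp_neg_le hα₀ (mul_pos hT hc) fun u => ?_)
  rw [mul_assoc]
  gcongr
  exact hlower u

section CosTransform

variable {E : Type*} [NormedAddCommGroup E] [InnerProductSpace ℝ E] [FiniteDimensional ℝ E]
  [MeasurableSpace E] [BorelSpace E] {g : E → ℝ}

/-- The inverse Fourier transform of an even function `g`, in the probabilists' normalization: the
density whose characteristic function is `g`. -/
noncomputable def cosTransform (g : E → ℝ) (x : E) : ℝ :=
  ((2 * Real.pi) ^ Module.finrank ℝ E)⁻¹ * ∫ u, Real.cos ⟪x, u⟫ * g u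

theorem cosTransform_neg (g : E → ℝ) (x : E) : cosTransform g (-x) = cosTransform g x := by
  simp only [cosTransform, inner_neg_left, Real.cos_neg]

theorem cosTransform_comp_smul (g : E → ℝ) {ρ : ℝ} (hρ : 0 < ρ) (x : E) :
    cosTransform (fun u => g (ρ • u)) x =
      (ρ ^ Module.finrank ℝ E)⁻¹ * cosTransform g (ρ⁻¹ • x) := by
  have h := Measure.integral_comp_smul_of_nonneg (volume : Measure E)
    (fun u => Real.cos ⟪ρ⁻¹ • x, u⟫ * g u) ρ (hR := hρ.le)
  simp only [real_inner_smul_left, real_inner_smul_right, mul_inv_cancel_left₀ hρ.ne',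
    smul_eq_mul] at h
  simp only [cosTransform, real_inner_smul_left, h]
  ring

theorem exists_schwartzMap_eq_cosTransform (f : 𝓢(E, ℝ)) : ∃ q : 𝓢(E, ℝ), ⇑q = cosTransform f := by
  let fℂ : 𝓢(E, ℂ) := SchwartzMap.postcompCLM (𝕜 := ℝ) Complex.ofRealCLM f
  refine ⟨schwartzDilate Real.two_pi_pos
    (SchwartzMap.postcompCLM (𝕜 := ℝ) Complex.reCLM (FourierTransform.fourier fℂ)),
    funext fun x => ?_⟩
  rw [schwartzDilate_apply, cosTransform, smul_eq_mul]
  congr 1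
  have hphase (u : E) :
      Complex.exp (↑(-2 * Real.pi * ⟪u, (2 * Real.pi)⁻¹ • x⟫) * Complex.I) • fℂ u =
        Complex.exp (↑(-⟪x, u⟫) * Complex.I) * f u := by
    rw [real_inner_smul_right, real_inner_comm]
    congr 4
    field_simp
  have hint : Integrable fun u => Complex.exp (↑(-⟪x, u⟫) * Complex.I) * (f u : ℂ) :=
    (f.integrable (μ := volume)).ofReal.bdd_mul (c := 1) (by fun_prop)
      (.of_forall fun u => (Complex.norm_exp_ofReal_mul_I _).le)
  calc (FourierTransform.fourier fℂ ((2 * Real.pi)⁻¹ • x)).re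
      = (∫ u, Complex.exp (↑(-⟪x, u⟫) * Complex.I) * f u).re := by
        simp only [SchwartzMap.fourier_coe, Real.fourier_eq', hphase]
    _ = ∫ u, (Complex.exp (↑(-⟪x, u⟫) * Complex.I) * f u).re := (integral_re hint).symm
    _ = ∫ u, Real.cos ⟪x, u⟫ * f u := by
        simp only [Complex.re_mul_ofReal, Complex.exp_ofReal_mul_I_re, Real.cos_neg]

variable {π : Measure E} [IsFiniteMeasure π]

theorem integral_cos_inner_sub_of_charFun_eq_ofReal {u : E} {r : ℝ} (hr : charFun π u = r) (x : E) :
    ∫ z, Real.cos ⟪x - z, u⟫ ∂π = Real.cos ⟪x, u⟫ * r := by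
  have hr_neg : charFun π (-u) = r := by rw [charFun_neg, hr, Complex.conj_ofReal]
  have hint : Integrable (fun z => Complex.exp (↑⟪x - z, u⟫ * Complex.I)) π :=
    (integrable_const (1 : ℝ)).mono' (by fun_prop)
      (.of_forall fun z => (Complex.norm_exp_ofReal_mul_I _).le)
  calc ∫ z, Real.cos ⟪x - z, u⟫ ∂π
      = ∫ z, (Complex.exp (↑⟪x - z, u⟫ * Complex.I)).re ∂π := by
        simp only [Complex.exp_ofReal_mul_I_re]
    _ = (∫ z, Complex.exp (↑⟪x - z, u⟫ * Complex.I) ∂π).re := integral_re hint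
    _ = (Complex.exp (↑⟪x, u⟫ * Complex.I) * charFun π (-u)).re := by
        simp only [charFun_apply, ← integral_const_mul, ← Complex.exp_add, ← add_mul,
          ← Complex.ofReal_add, inner_add_left, inner_neg_left, inner_neg_right,
          sub_eq_add_neg]
    _ = Real.cos ⟪x, u⟫ * r := by
        rw [hr_neg, Complex.re_mul_ofReal, Complex.exp_ofReal_mul_I_re]

theorem integral_cosTransform_sub {h : E → ℝ} (hg : Integrable g)
    (hπ : ∀ u, charFun π u = h u) (x : E) :
    ∫ z, cosTransform g (x - z) ∂π = cosTransform (fun u => h u * g u) x := by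
  have hint : Integrable (Function.uncurry fun z u => Real.cos ⟪x - z, u⟫ * g u)
      (π.prod volume) :=
    (hg.comp_snd π).bdd_mul (c := 1) (by fun_prop) (.of_forall fun p => Real.abs_cos_le_one _)
  simp only [cosTransform]
  rw [integral_const_mul, integral_integral_swap hint]
  simp only [integral_mul_const, integral_cos_inner_sub_of_charFun_eq_ofReal (hπ _), mul_assoc]

end CosTransform

section CompoundPoisson

variable {M : Type*} [AddMonoid M] [MeasurableSpace M]

/-- The `n`-fold convolution power of a measure. -/
noncomputable def convPow (ν : Measure M) : ℕ → Measure M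
  | 0 => Measure.dirac 0
  | n + 1 => ν ∗ convPow ν n

instance isFiniteMeasure_convPow (ν : Measure M) [IsFiniteMeasure ν] (n : ℕ) :
    IsFiniteMeasure (convPow ν n) := by
  induction n with
  | zero => unfold convPow; infer_instance
  | succ n ih => unfold convPow; infer_instance

/-- The compound Poisson law with finite jump measure `ν`: the law at time one of the Lévy process
whose jumps are governed by `ν`. -/
noncomputable def compoundPoisson (ν : Measure M) : Measure M :=
  Measure.sum fun n => ENNReal.ofReal (Real.exp (-ν.real Set.univ) / n.factorial) • convPow ν n

variable {E : Type*} [NormedAddCommGroup E] [InnerProductSpace ℝ E] [MeasurableSpace E]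
  [BorelSpace E] [SecondCountableTopology E] {ν : Measure E} [IsFiniteMeasure ν]

theorem charFun_convPow (n : ℕ) (u : E) : charFun (convPow ν n) u = charFun ν u ^ n := by
  induction n with
  | zero => simp [convPow]
  | succ n ih => rw [convPow, charFun_conv, ih, pow_succ']

theorem convPow_univ (n : ℕ) : convPow ν n Set.univ = ENNReal.ofReal (ν.real Set.univ ^ n) := by
  have h := charFun_convPow (ν := ν) n 0
  simp only [charFun_zero] at h
  rw [← ofReal_measureReal, show (convPow ν n).real Set.univ = _ from mod_cast h]

instance isFiniteMeasure_compoundPoisson : IsFiniteMeasure (compoundPoisson ν) := by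
  constructor
  simp only [compoundPoisson, Measure.sum_apply _ MeasurableSet.univ, Measure.smul_apply,
    smul_eq_mul, convPow_univ]
  simp only [← ENNReal.ofReal_mul (div_nonneg (Real.exp_pos _).le (Nat.cast_nonneg _)),
    div_mul_eq_mul_div, mul_div_assoc]
  exact ((Real.summable_pow_div_factorial _).mul_left _).tsum_ofReal_lt_top

theorem charFun_compoundPoisson (u : E) :
    charFun (compoundPoisson ν) u = Complex.exp (charFun ν u - ν.real Set.univ) := by
  have hint : Integrable (fun x => Complex.exp (⟪x, u⟫ * Complex.I)) (compoundPoisson ν) :=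
    (integrable_const (1 : ℝ)).mono' (by fun_prop)
      (.of_forall fun x => (Complex.norm_exp_ofReal_mul_I _).le)
  have hterm (n : ℕ) : ∫ x, Complex.exp (⟪x, u⟫ * Complex.I)
      ∂(ENNReal.ofReal (Real.exp (-ν.real Set.univ) / n.factorial) • convPow ν n) =
      Complex.exp (-ν.real Set.univ) * (charFun ν u ^ n / n.factorial) := by
    rw [integral_smul_measure, ENNReal.toReal_ofReal (by positivity), ← charFun_apply,
      charFun_convPow, Complex.real_smul]
    push_cast
    ring
  have hsum := hasSum_integral_measure hint
  simp only [hterm] at hsum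
  have hexp := (NormedSpace.expSeries_div_hasSum_exp (charFun ν u)).mul_left
    (Complex.exp (-ν.real Set.univ))
  rw [← Complex.exp_eq_exp_ℂ, ← Complex.exp_add] at hexp
  rw [charFun_apply, sub_eq_neg_add]
  exact hsum.unique hexp

instance isProbabilityMeasure_compoundPoisson : IsProbabilityMeasure (compoundPoisson ν) := by
  have h := charFun_compoundPoisson (ν := ν) 0
  simp only [charFun_zero, sub_self, Complex.exp_zero] at h
  exact ⟨by rw [← ofReal_measureReal, show (compoundPoisson ν).real Set.univ = 1 from mod_cast h,
    ENNReal.ofReal_one]⟩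

theorem charFun_sub_measureReal_univ [ν.IsNegInvariant] (u : E) :
    charFun ν u - ν.real Set.univ = ↑(-levyExponent ν u) := by
  have hcos : Integrable (fun y => Real.cos ⟪u, y⟫) ν :=
    (integrable_const (1 : ℝ)).mono' (by fun_prop) (.of_forall fun y => Real.abs_cos_le_one _)
  have hsin : Integrable (fun y => Real.sin ⟪u, y⟫) ν :=
    (integrable_const (1 : ℝ)).mono' (by fun_prop) (.of_forall fun y => Real.abs_sin_le_one _)
  have hodd : ∫ y, Real.sin ⟪u, y⟫ ∂ν = 0 := by
    have := integral_neg_eq_self (fun y => Real.sin ⟪u, y⟫) ν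
    simp only [inner_neg_right, Real.sin_neg, integral_neg] at this
    linarith
  have hchar : charFun ν u = ↑(∫ y, Real.cos ⟪u, y⟫ ∂ν) := by
    simp only [charFun_apply, Complex.exp_mul_I, ← Complex.ofReal_cos, ← Complex.ofReal_sin,
      real_inner_comm u]
    rw [integral_add hcos.ofReal (hsin.ofReal.mul_const _), integral_mul_const,
      integral_complex_ofReal, integral_complex_ofReal, hodd]
    simp
  rw [hchar, levyExponent, integral_sub (integrable_const 1) hcos]
  simp

theorem charFun_compoundPoisson_of_isNegInvariant [ν.IsNegInvariant] (u : E) :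
    charFun (compoundPoisson ν) u = Real.exp (-levyExponent ν u) := by
  rw [charFun_compoundPoisson, charFun_sub_measureReal_univ, Complex.ofReal_exp]

end CompoundPoisson

section Averaging

variable {E : Type*} [NormedAddCommGroup E] [MeasurableSpace E] {π : Measure E}
  [IsProbabilityMeasure π] {φ : E → ℝ} {K : ℝ}

theorem abs_integral_comp_sub_le (hK : ∀ x, |φ x| ≤ K) (w : E) : |∫ z, φ (w - z) ∂π| ≤ K := by
  simpa using norm_integral_le_of_norm_le_const (μ := π) (f := fun z => φ (w - z))
    (.of_forall fun z => hK (w - z))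

variable [BorelSpace E] [SecondCountableTopology E]

theorem integrable_comp_sub_of_bounded (hφ : Continuous φ) (hK : ∀ x, |φ x| ≤ K) (w : E) :
    Integrable (fun z => φ (w - z)) π :=
  (integrable_const K).mono' (by fun_prop) (.of_forall fun _ => hK _)

theorem continuous_integral_comp_sub (hφ : Continuous φ) (hK : ∀ x, |φ x| ≤ K) :
    Continuous fun w => ∫ z, φ (w - z) ∂π :=
  continuous_of_dominated (fun w => (integrable_comp_sub_of_bounded hφ hK w).1)
    (fun _ => .of_forall fun _ => hK _) (integrable_const K) (.of_forall fun _ => by fun_prop)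

theorem abs_integral_comp_sub_sub_le (hφ : Continuous φ) (hK : ∀ x, |φ x| ≤ K) {H β : ℝ}
    (hH : ∀ x y, |φ x - φ y| ≤ H * ‖x - y‖ ^ β) (x y : E) :
    |∫ z, φ (x - z) ∂π - ∫ z, φ (y - z) ∂π| ≤ H * ‖x - y‖ ^ β := by
  rw [← integral_sub (integrable_comp_sub_of_bounded hφ hK x)
    (integrable_comp_sub_of_bounded hφ hK y)]
  simpa using norm_integral_le_of_norm_le_const (μ := π) (f := fun z => φ (x - z) - φ (y - z))
    (.of_forall fun z => (hH (x - z) (y - z)).trans_eq (by rw [sub_sub_sub_cancel_right]))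

theorem integral_mul_integral_comp_sub {a : E → ℝ} {μ : Measure E} [SFinite μ]
    [μ.IsAddLeftInvariant] [μ.IsNegInvariant] (ha : Continuous a) (hint : Integrable a μ)
    (hφ : Continuous φ) (hK : ∀ x, |φ x| ≤ K) (x : E) :
    ∫ w, φ w * ∫ z, a (x - w - z) ∂π ∂μ = ∫ w, (∫ z, φ (w - z) ∂π) * a (x - w) ∂μ := by
  have hleft : Integrable (Function.uncurry fun z w => φ w * a (x - w - z)) (π.prod μ) := by
    have hshift : Integrable (fun p : E × E => a (x - p.2 - p.1)) (π.prod μ) := by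
      refine (integrable_prod_iff (by fun_prop)).2 ⟨.of_forall fun z => ?_, ?_⟩
      · simpa only [sub_right_comm x _ z] using hint.comp_sub_left (x - z)
      · simp only [sub_right_comm x _]
        simp only [integral_sub_left_eq_self (fun y => ‖a y‖) μ]
        exact integrable_const _
    exact hshift.bdd_mul (c := K) (by fun_prop) (.of_forall fun p => hK p.2)
  have hright : Integrable (Function.uncurry fun z w => φ (w - z) * a (x - w)) (π.prod μ) :=
    ((hint.comp_sub_left x).comp_snd π).bdd_mul (c := K) (by fun_prop)
      (.of_forall fun p => hK (p.2 - p.1))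
  calc ∫ w, φ w * ∫ z, a (x - w - z) ∂π ∂μ = ∫ z, ∫ w, φ w * a (x - w - z) ∂μ ∂π := by
        rw [integral_integral_swap hleft]
        simp only [integral_const_mul]
    _ = ∫ z, ∫ w, φ (w - z) * a (x - w) ∂μ ∂π := by
        congr with z
        rw [← integral_sub_right_eq_self _ z]
        simp only [sub_sub, sub_add_cancel]
    _ = _ := by
        rw [integral_integral_swap hright]
        simp only [integral_mul_const]

end Averaging

section TruncatedStableDensity

variable {E : Type*} [NormedAddCommGroup E] [InnerProductSpace ℝ E]

theorem exists_isProbabilityMeasure_charFun_eq_exp_neg_levyExponent [MeasurableSpace E]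
    [BorelSpace E] [SecondCountableTopology E] {t : ℝ} (ht : 0 ≤ t) (ν : Measure E)
    [IsFiniteMeasure ν] [ν.IsNegInvariant] :
    ∃ π : Measure E, IsProbabilityMeasure π ∧
      ∀ u, charFun π u = Real.exp (-(t * levyExponent ν u)) := by
  have : IsFiniteMeasure (ENNReal.ofReal t • ν) := ν.smul_finite ENNReal.ofReal_ne_top
  have := isNegInvariant_smul_measure (μ := ν) (ENNReal.ofReal t)
  refine ⟨compoundPoisson (ENNReal.ofReal t • ν), inferInstance, fun u => ?_⟩
  rw [charFun_compoundPoisson_of_isNegInvariant, levyExponent_smul_measure ht]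

variable [FiniteDimensional ℝ E] [MeasurableSpace E] [BorelSpace E] {α ρ t : ℝ}

/-- The density at time `t` of the isotropic `α`-stable process with jumps truncated at length `1`,
given by Fourier inversion; the coordinate-free form of `pdens`. -/
noncomputable def truncatedStableDensity (E : Type*) [NormedAddCommGroup E] [InnerProductSpace ℝ E]
    [FiniteDimensional ℝ E] [MeasurableSpace E] [BorelSpace E] (α t : ℝ) : E → ℝ :=
  cosTransform fun u => Real.exp (-(t * levyExponent (truncatedStable E α 1) u))

theorem integral_comp_add_mul_truncatedStableDensity (φ : E → ℝ) (x : E) :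
    ∫ y, φ (x + y) * truncatedStableDensity E α t y =
      ∫ w, φ w * truncatedStableDensity E α t (x - w) := by
  rw [← integral_add_left_eq_self (fun w => φ w * _) x]
  congr with y
  rw [sub_add_cancel_left, truncatedStableDensity, cosTransform_neg]

variable [Nontrivial E]

theorem exists_schwartzMap_eq_truncatedStableDensity (hα₀ : 0 < α) (hα : α < 2) (ht : 0 < t) :
    ∃ q : 𝓢(E, ℝ), ⇑q = truncatedStableDensity E α t := by
  obtain ⟨f, hf⟩ := exists_schwartzMap_eq_exp_neg_levyExponent_truncatedStable (E := E) hα₀ hα ht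
  obtain ⟨q, hq⟩ := exists_schwartzMap_eq_cosTransform f
  exact ⟨q, by rw [hq, truncatedStableDensity, funext hf]⟩

-- `π` is the law at time `t` of the jumps longer than `ρ`; the jumps shorter than `ρ` have, by
-- scaling, the law of the whole process at time `t * ρ ^ (-α)`, shrunk by the factor `ρ`.
theorem exists_truncatedStableDensity_eq_integral_schwartzDilate (hα₀ : 0 < α) (hα : α < 2)
    (ht : 0 < t) (hρ : 0 < ρ) (hρ₁ : ρ ≤ 1) {q : 𝓢(E, ℝ)}
    (hq : ⇑q = truncatedStableDensity E α (t * ρ ^ (-α))) :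
    ∃ π : Measure E, IsProbabilityMeasure π ∧
      ∀ x, truncatedStableDensity E α t x = ∫ z, schwartzDilate hρ q (x - z) ∂π := by
  have hν := integrable_norm_pow_truncatedStable_of_two_le (E := E) (R := 1) hα le_rfl
  have := isFiniteMeasure_restrict_compl_closedBall hν hρ
  have := isNegInvariant_restrict_of_neg_eq (μ := truncatedStable E α 1)
    (measurableSet_closedBall (x := 0) (ε := ρ)).compl (by ext; simp)
  obtain ⟨π, hπ, hcharFun⟩ := exists_isProbabilityMeasure_charFun_eq_exp_neg_levyExponent ht.le
    ((truncatedStable E α 1).restrict (closedBall 0 ρ)ᶜ)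
  obtain ⟨f, hf⟩ := exists_schwartzMap_eq_exp_neg_levyExponent_truncatedStable (E := E) hα₀ hα
    (mul_pos ht (Real.rpow_pos_of_pos hρ (-α)))
  have hsmall : ⇑(schwartzDilate hρ q) = cosTransform fun u => f (ρ • u) := by
    funext x
    rw [cosTransform_comp_smul f hρ, schwartzDilate_apply, hq, truncatedStableDensity, ← funext hf,
      smul_eq_mul]
  refine ⟨π, hπ, fun x => ?_⟩
  rw [hsmall, integral_cosTransform_sub ((f.integrable (μ := volume)).comp_smul hρ.ne') hcharFun,
    truncatedStableDensity]
  congr with u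
  rw [hf, ← Real.exp_add, levyExponent_truncatedStable_eq_small_add_large hν hρ hρ₁]
  ring_nf

theorem exists_integral_comp_add_mul_truncatedStableDensity_eq (hα₀ : 0 < α) (hα : α < 2)
    (ht : 0 < t) (hρ : 0 < ρ) (hρ₁ : ρ ≤ 1) {q : 𝓢(E, ℝ)}
    (hq : ⇑q = truncatedStableDensity E α (t * ρ ^ (-α))) {φ : E → ℝ} {K : ℝ}
    (hφ : Continuous φ) (hK : ∀ x, |φ x| ≤ K) :
    ∃ π : Measure E, IsProbabilityMeasure π ∧
      (fun x => ∫ y, φ (x + y) * truncatedStableDensity E α t y) =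
        fun x => ∫ w, (∫ z, φ (w - z) ∂π) • schwartzDilate hρ q (x - w) := by
  obtain ⟨π, hπ, hconv⟩ :=
    exists_truncatedStableDensity_eq_integral_schwartzDilate hα₀ hα ht hρ hρ₁ hq
  refine ⟨π, hπ, funext fun x => ?_⟩
  rw [integral_comp_add_mul_truncatedStableDensity]
  simp only [hconv, smul_eq_mul]
  exact integral_mul_integral_comp_sub (schwartzDilate hρ q).continuous
    ((schwartzDilate hρ q).integrable (μ := volume)) hφ hK x

theorem contDiff_and_norm_iteratedFDeriv_integral_mul_truncatedStableDensity_le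
    (hα₀ : 0 < α) (hα : α < 2) (ht : 0 < t) (hρ : 0 < ρ) (hρ₁ : ρ ≤ 1) {q : 𝓢(E, ℝ)}
    (hq : ⇑q = truncatedStableDensity E α (t * ρ ^ (-α))) {φ : E → ℝ} {K H β : ℝ} {n : ℕ}
    (hφ : Continuous φ) (hK : ∀ x, |φ x| ≤ K) (hβ : 0 ≤ β)
    (hH : ∀ x y, |φ x - φ y| ≤ H * ‖x - y‖ ^ β) (hn : n ≠ 0) :
    ContDiff ℝ ∞ (fun x => ∫ y, φ (x + y) * truncatedStableDensity E α t y) ∧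
      ∀ x, ‖iteratedFDeriv ℝ n (fun x => ∫ y, φ (x + y) * truncatedStableDensity E α t y) x‖ ≤
        H * (ρ ^ (β - n) * ∫ y, ‖y‖ ^ β * ‖iteratedFDeriv ℝ n q y‖) := by
  obtain ⟨π, hπ, heq⟩ :=
    exists_integral_comp_add_mul_truncatedStableDensity_eq hα₀ hα ht hρ hρ₁ hq hφ hK
  have hmeas := (continuous_integral_comp_sub (π := π) hφ hK).aestronglyMeasurable (μ := volume)
  rw [heq, ← integral_rpow_norm_mul_iteratedFDeriv_schwartzDilate hρ]
  exact ⟨(hasFTaylorSeriesUpTo_integral_smul_schwartz _ hmeas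
      (abs_integral_comp_sub_le hK)).contDiff,
    norm_iteratedFDeriv_integral_smul_schwartz_le _ hmeas (abs_integral_comp_sub_le hK) hβ
      (abs_integral_comp_sub_sub_le hφ hK hH) hn⟩

end TruncatedStableDensity

section Holder

variable {E : Type*} [NormedAddCommGroup E] {f : E → ℝ} {β H : ℝ}

theorem continuous_of_abs_sub_le_rpow (hβ : 0 < β) (hH : ∀ x y, |f x - f y| ≤ H * ‖x - y‖ ^ β) :
    Continuous f := by
  refine continuous_iff_continuousAt.2 fun x => tendsto_iff_norm_sub_tendsto_zero.2
    (squeeze_zero (fun _ => norm_nonneg _) (fun y => hH y x) ?_)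
  have hcont : Continuous fun y => H * ‖y - x‖ ^ β :=
    continuous_const.mul ((continuous_id.sub continuous_const).norm.rpow_const fun _ => .inr hβ.le)
  simpa [Real.zero_rpow hβ.ne'] using hcont.tendsto x

theorem abs_sub_le_holderNorm_mul (hH : ∀ x y, |f x - f y| ≤ H * ‖x - y‖ ^ β) (x y : E) :
    |f x - f y| ≤ holderNorm β f * ‖x - y‖ ^ β := by
  have hsup : 0 ≤ ⨆ x, |f x| := Real.iSup_nonneg fun x => abs_nonneg _
  rcases eq_or_ne x y with rfl | hxy
  · rw [sub_self, abs_zero]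
    exact mul_nonneg (add_nonneg hsup (Real.iSup_nonneg fun p => by positivity)) (by positivity)
  · have hpos {p : E × E} (hp : p.1 ≠ p.2) : 0 < ‖p.1 - p.2‖ ^ β :=
      Real.rpow_pos_of_pos (norm_pos_iff.2 (sub_ne_zero.2 hp)) β
    have hbdd : BddAbove (Set.range fun p : {q : E × E // q.1 ≠ q.2} =>
        |f p.val.1 - f p.val.2| / ‖p.val.1 - p.val.2‖ ^ β) :=
      ⟨H, Set.forall_mem_range.2 fun p => (div_le_iff₀ (hpos p.2)).2 (hH _ _)⟩
    rw [← div_le_iff₀ (hpos (p := (x, y)) hxy)]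
    exact (le_ciSup hbdd ⟨(x, y), hxy⟩).trans (le_add_of_nonneg_left hsup)

end Holder

theorem pdens_eq_truncatedStableDensity (d : ℕ) (α t : ℝ) :
    pdens d α t = truncatedStableDensity (EuclideanSpace ℝ (Fin d)) α t := by
  funext x
  simp only [pdens, Psi, truncatedStableDensity, cosTransform, levyExponent_truncatedStable,
    finrank_euclideanSpace_fin, neg_mul]

theorem div_rpow_one_div_rpow {t T α : ℝ} (ht : 0 ≤ t) (hT : 0 ≤ T) (r : ℝ) :
    ((t / T) ^ (1 / α)) ^ r = T ^ (-(r / α)) * t ^ (r / α) := by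
  rw [← Real.rpow_mul (div_nonneg ht hT), Real.div_rpow ht hT, one_div_mul_eq_div,
    Real.rpow_neg hT, mul_comm, div_eq_mul_inv]

theorem stmt_10_general {d n : ℕ} (hd : d ≠ 0) (hn : n ≠ 0) {α β T : ℝ} (hα₀ : 0 < α) (hα : α < 2)
    (hβ : 0 < β) (hT : 0 < T) :
    ∃ C : ℝ, ∀ φ : EuclideanSpace ℝ (Fin d) → ℝ,
      (∃ K : ℝ, ∀ x, |φ x| ≤ K) →
      (∃ K : ℝ, ∀ x y, |φ x - φ y| ≤ K * ‖x - y‖ ^ β) →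
      ∀ t : ℝ, 0 < t → t ≤ T →
        ContDiff ℝ ∞ (Pt d α φ t) ∧
        ∀ x : EuclideanSpace ℝ (Fin d),
          ‖iteratedFDeriv ℝ n (Pt d α φ t) x‖ ≤ C * t ^ (-((n - β) / α)) * holderNorm β φ := by
  have : NeZero d := ⟨hd⟩
  obtain ⟨q, hq⟩ := exists_schwartzMap_eq_truncatedStableDensity (E := EuclideanSpace ℝ (Fin d))
    hα₀ hα hT
  refine ⟨T ^ (-((β - n) / α)) * ∫ y, ‖y‖ ^ β * ‖iteratedFDeriv ℝ n q y‖, ?_⟩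
  rintro φ ⟨K, hK⟩ ⟨H, hH⟩ t ht htT
  have hρ : 0 < (t / T) ^ (1 / α) := by positivity
  have hρ₁ : (t / T) ^ (1 / α) ≤ 1 :=
    Real.rpow_le_one (by positivity) ((div_le_one hT).2 htT) (by positivity)
  have htime : t * ((t / T) ^ (1 / α)) ^ (-α) = T := by
    rw [div_rpow_one_div_rpow ht.le hT.le, neg_div, neg_neg, div_self hα₀.ne', Real.rpow_one,
      Real.rpow_neg_one]
    field_simp
  obtain ⟨hsmooth, hbound⟩ :=
    contDiff_and_norm_iteratedFDeriv_integral_mul_truncatedStableDensity_le hα₀ hα ht hρ hρ₁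
      (by rwa [htime]) (continuous_of_abs_sub_le_rpow hβ hH) hK hβ.le
      (abs_sub_le_holderNorm_mul hH) hn
  rw [← pdens_eq_truncatedStableDensity] at hsmooth hbound
  refine ⟨hsmooth, fun x => (hbound x).trans_eq ?_⟩
  rw [div_rpow_one_div_rpow ht.le hT.le, ← neg_sub (n : ℝ) β, neg_div]
  ring

/-- Hessian estimate `‖D²(P_t φ)‖_∞ ≤ C t^{-(2-β)/α} ‖φ‖_{C_b^β}` for `φ ∈ C_b^β`. -/
theorem stmt_10 (d : ℕ) (hd : 2 ≤ d) (α β T : ℝ) (hα1 : 1 < α) (hα2 : α < 2)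
    (hβ0 : 0 < β) (hβ1 : β < 1) (hT : 0 < T) :
    ∃ C : ℝ, ∀ φ : EuclideanSpace ℝ (Fin d) → ℝ,
      (∃ K : ℝ, ∀ x, |φ x| ≤ K) →
      (∃ K : ℝ, ∀ x y, |φ x - φ y| ≤ K * ‖x - y‖ ^ β) →
      ∀ t : ℝ, 0 < t → t ≤ T →
        ContDiff ℝ 2 (Pt d α φ t) ∧
        ∀ x : EuclideanSpace ℝ (Fin d),
          ‖iteratedFDeriv ℝ 2 (Pt d α φ t) x‖ ≤
            C * t ^ (-((2 - β) / α)) * holderNorm β φ := by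
  obtain ⟨C, hC⟩ := stmt_10_general (d := d) (by lia) two_ne_zero (one_pos.trans hα1) hα2 hβ0 hT
  exact ⟨C, fun φ hK hH t ht htT => (hC φ hK hH t ht htT).imp (contDiff_infty.1 · 2) id⟩
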